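/- For all w, u ∈ ℌ̂⁰ one has ζ_q(w)·ζ_q(u) = ζ_q(w ⧢_q u); in particular ζ_q: ℌ̂⁰ → ℚ[[q]] is a 𝒞-algebra homomorphism with respect to the q-shuffle product ⧢_q. -/

import Mathlib

/- STATEMENT 16: For all w, u ∈ ℌ̂⁰ one has ζ_q(w)·ζ_q(u) = ζ_q(w ⧢_q u); in
particular ζ_q : ℌ̂⁰ → ℚ[[q]] is a 𝒞-algebra homomorphism with respect to the
q-shuffle product ⧢_q. Here 𝒞 = ℚ[ℏ,ℏ⁻¹], ℌ̂ = 𝒞⟨a,b⟩, e_k = a^k b, ℌ̂⁰ is the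
𝒞-span of 𝟏 and the words e_{k₁}⋯e_{k_r} with k₁ ≥ 1, and ⧢_q is the
generalized quasi-shuffle product associated to ⋄_q (a⋄_qa = ℏa,
a⋄_qb = b⋄_qa = −ab, b⋄_qb = −bb); ℏ acts on ℚ[[q]] as multiplication by 1-q. -/

noncomputable section

/-- The two letters a, b of ℌ̂ = 𝒞⟨a,b⟩. -/
inductive AB : Type
  | a : AB
  | b : AB

/-- 𝒞 = ℚ[ℏ,ℏ⁻¹]. -/
abbrev CC : Type := LaurentPolynomial ℚ

/-- ℏ ∈ 𝒞. -/
def hbar : CC := LaurentPolynomial.T 1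

/-- A word in the letters a, b as an element of ℌ̂ = 𝒞⟨a,b⟩. -/
def ofW (w : List AB) : MonoidAlgebra CC (FreeMonoid AB) :=
  MonoidAlgebra.of CC (FreeMonoid AB) (FreeMonoid.ofList w)

/-- The word e_{k₁}⋯e_{k_r} ∈ ℌ̂, where e_k = a^k b. -/
def eWord (ks : List ℕ) : List AB :=
  (ks.map fun k => List.replicate k AB.a ++ [AB.b]).flatten

/-- The values of ⋄_q on the letters. -/
def dq : AB → AB → MonoidAlgebra CC (FreeMonoid AB)
  | AB.a, AB.a => hbar • ofW [AB.a]
  | AB.a, AB.b => -ofW [AB.a, AB.b]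
  | AB.b, AB.a => -ofW [AB.a, AB.b]
  | AB.b, AB.b => -ofW [AB.b, AB.b]

/-- The index list (k₁,…,k_r) is admissible: either empty or k₁ ≥ 1. -/
def Admissible (l : List ℕ) : Prop := ∀ h : l ≠ [], 1 ≤ l.head h

instance : TopologicalSpace (PowerSeries ℚ) := by
  unfold PowerSeries MvPowerSeries; infer_instance

/-- [m]_q = (1-q^m)/(1-q) = 1 + q + ⋯ + q^{m-1} ∈ ℚ[[q]]. -/
def qnum (m : ℕ) : PowerSeries ℚ := ∑ i ∈ Finset.range m, PowerSeries.X ^ i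

/-- The Schlesinger–Zudilin q-multiple zeta value
ζ_q(k₁,…,k_r) = Σ_{m₁>⋯>m_r>0} ∏_j q^{k_j m_j}/[m_j]_q^{k_j} ∈ ℚ[[q]]. -/
def zetaQ (ks : List ℕ) : PowerSeries ℚ :=
  ∑' m : {m : Fin ks.length → ℕ //
      (∀ i j : Fin ks.length, i < j → m j < m i) ∧ ∀ i, 0 < m i},
    ∏ j : Fin ks.length,
      PowerSeries.X ^ (ks.get j * m.1 j) * ((qnum (m.1 j))⁻¹) ^ ks.get j

/-- ℌ̂⁰, the 𝒞-span of 𝟏 and the admissible words e_{k₁}⋯e_{k_r}, k₁ ≥ 1. -/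
def H0 : Submodule CC (MonoidAlgebra CC (FreeMonoid AB)) :=
  Submodule.span CC {x | ∃ ks : List ℕ, Admissible ks ∧ x = ofW (eWord ks)}

/-!
The letters act on `ℚ⟦q⟧⟦t⟧`: `a` by the Jackson-type operator `A : t^m ↦ λ_m t^m` with
`λ_m = q^m / [m]_q`, and `b` by the multiplication `B` with `t / (1 - t)`. Since `B` sends `t^m` to
`∑_{m' > m} t^{m'}`, applying the word `e_{k₁}⋯e_{k_r}` to `1` gives
`∑_{m₁ > ⋯ > m_r > 0} ∏_j λ_{m_j}^{k_j} t^{m₁}`, whose value at `t = 1` is `ζ_q(k₁,…,k_r)`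
(`zetaQ_eq_ev`).

The recursion for `⧢_q` expresses how products of such series decompose. For two letters `b`, or an
`a` and a `b`, the identity is a triviality about multiplication by `t / (1 - t)`. For two letters `a`
it is the Rota–Baxter identity `Af · Ag = A(f · Ag) + A(Af · g) + (1 - q) A(fg)` (`opA_mul_opA`), a
consequence of `λ_i λ_j = λ_{i+j} (λ_i + λ_j + 1 - q)` for `i, j ≥ 1`. Hence `w ↦ w · 1` is
multiplicative on words ending in `b` (`gen_sh`). Evaluation at `t = 1` is multiplicative on series
`∑_m c_m t^m` with `q^m ∣ c_m` (`ev_mul`), a condition which admissible words satisfy, and `ℌ̂⁰` is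
closed under `⧢_q` (`sh_mem_H0`).
-/

/-! ### Operators on `ℚ⟦q⟧⟦t⟧` -/

/-- The eigenvalue `λ_m = q^m / [m]_q` by which the letter `a` acts on `t^m`. For `m = 0` the
convention `0⁻¹ = 0` gives `λ_0 = 0`. -/
def lam (m : ℕ) : PowerSeries ℚ := PowerSeries.X ^ m * (qnum m)⁻¹

lemma lam_zero : lam 0 = 0 := by simp [lam, qnum]

lemma X_pow_dvd_lam (m : ℕ) : PowerSeries.X ^ m ∣ lam m := Dvd.intro _ rfl

lemma qnum_mul_inv {m : ℕ} (hm : 0 < m) : qnum m * (qnum m)⁻¹ = 1 := by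
  apply PowerSeries.mul_inv_cancel
  obtain ⟨m, rfl⟩ := Nat.exists_eq_succ_of_ne_zero hm.ne'
  simp [qnum, Finset.sum_range_succ']

lemma qnum_mul_one_sub (m : ℕ) : qnum m * (1 - PowerSeries.X) = 1 - PowerSeries.X ^ m :=
  geom_sum_mul_neg _ _

/-- The partial fraction identity behind `a ⋄ a = ℏ a`. -/
lemma lam_mul_lam {i j : ℕ} (hi : 0 < i) (hj : 0 < j) :
    lam i * lam j = lam (i + j) * (lam i + lam j + (1 - PowerSeries.X)) := by
  have h1 := qnum_mul_inv hi
  have h2 := qnum_mul_inv hj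
  have h3 := qnum_mul_inv (Nat.add_pos_left hi j)
  have h4 := qnum_mul_one_sub j
  have h5 : qnum (i + j) = qnum i + PowerSeries.X ^ i * qnum j := by
    simp [qnum, Finset.sum_range_add, Finset.mul_sum, pow_add]
  simp only [lam]
  rw [pow_add]
  generalize (qnum i)⁻¹ = u at *
  generalize (qnum j)⁻¹ = v at *
  generalize (qnum (i + j))⁻¹ = s at *
  generalize hx : (PowerSeries.X : PowerSeries ℚ) ^ i = x at *
  generalize hy : (PowerSeries.X : PowerSeries ℚ) ^ j = y at *
  -- clearing `[i]` and `[j]`, the bracket is `[i+j]/([i][j])`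
  have key : x * u + y * v + (1 - PowerSeries.X) = u * v * qnum (i + j) := by
    rw [h5]
    linear_combination (-(y * v) - (1 - PowerSeries.X)) * h1
      + (-x * u - (1 - PowerSeries.X) * u * qnum i) * h2 + u * v * qnum i * h4
  rw [key]
  linear_combination (-x * y * u * v) * h3

/-- The additive endomorphisms of `ℚ⟦q⟧⟦t⟧`. Scalars from `ℚ⟦q⟧` are written as multiplication by
constant series: the `SMul` instance found by unification need not be the coefficientwise one, as
`ℚ⟦q⟧` also acts through `q ↦ t`. -/
abbrev Op : Type := AddMonoid.End (PowerSeries (PowerSeries ℚ))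

/-- The operator `t^m ↦ λ_m t^m` on `ℚ⟦q⟧⟦t⟧`, the action of the letter `a`. -/
def opA : Op where
  toFun f := PowerSeries.mk fun n => lam n * PowerSeries.coeff n f
  map_zero' := by ext1 n; simp
  map_add' f g := by ext1 n; simp [mul_add]

/-- The series `t / (1 - t)`. -/
def geo : PowerSeries (PowerSeries ℚ) := PowerSeries.mk fun n => if n = 0 then 0 else 1

/-- Multiplication by `t / (1 - t)` on `ℚ⟦q⟧⟦t⟧`, the action of the letter `b`. -/
def opB : Op := AddMonoidHom.mulLeft geo

@[simp] lemma coeff_opA (f : PowerSeries (PowerSeries ℚ)) (n : ℕ) :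
    PowerSeries.coeff n (opA f) = lam n * PowerSeries.coeff n f := by
  exact PowerSeries.coeff_mk n fun n => lam n * PowerSeries.coeff n f

lemma opB_apply (f : PowerSeries (PowerSeries ℚ)) : opB f = geo * f := rfl

lemma coeff_opB (f : PowerSeries (PowerSeries ℚ)) (n : ℕ) :
    PowerSeries.coeff n (opB f) = ∑ p ∈ Finset.range n, PowerSeries.coeff p f := by
  rw [opB_apply, mul_comm, PowerSeries.coeff_mul,
    Finset.Nat.sum_antidiagonal_eq_sum_range_succ
      (fun i j => PowerSeries.coeff i f * PowerSeries.coeff j geo), Finset.sum_range_succ]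
  simp only [geo, PowerSeries.coeff_mk, Nat.sub_self, if_true, mul_zero, add_zero]
  refine Finset.sum_congr rfl fun p hp => ?_
  have := Finset.mem_range.1 hp
  rw [if_neg (by omega), mul_one]

/-- The weight `1 - q` Rota–Baxter identity for the action of `a`. The vanishing of the constant
terms is needed because `λ_0 = 0` is a convention that the partial fraction identity violates. -/
lemma opA_mul_opA {f g : PowerSeries (PowerSeries ℚ)} (hf : PowerSeries.coeff 0 f = 0)
    (hg : PowerSeries.coeff 0 g = 0) :
    opA f * opA g = opA (f * opA g) + opA (opA f * g)
      + PowerSeries.C (1 - PowerSeries.X) * opA (f * g) := by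
  ext1 n
  simp only [map_add, PowerSeries.coeff_C_mul, coeff_opA]
  simp only [PowerSeries.coeff_mul, coeff_opA, Finset.mul_sum,
    ← Finset.sum_add_distrib]
  refine Finset.sum_congr rfl fun p hp => ?_
  replace hp := Finset.HasAntidiagonal.mem_antidiagonal.1 hp
  subst hp
  rcases Nat.eq_zero_or_pos p.1 with h1 | h1
  · simp [h1, hf]
  rcases Nat.eq_zero_or_pos p.2 with h2 | h2
  · simp [h2, hg]
  linear_combination PowerSeries.coeff p.1 f * PowerSeries.coeff p.2 g * lam_mul_lam h1 h2

/-! ### The representation of `ℌ̂` -/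

/-- `1 - q` as a unit of `ℚ⟦q⟧`. -/
def oneSubX : (PowerSeries ℚ)ˣ where
  val := 1 - PowerSeries.X
  inv := (1 - PowerSeries.X)⁻¹
  val_inv := PowerSeries.mul_inv_cancel _ (by simp)
  inv_val := PowerSeries.inv_mul_cancel _ (by simp)

/-- The structure map `𝒞 → ℚ⟦q⟧`, `ℏ ↦ 1 - q`. -/
def phi : CC →+* PowerSeries ℚ := LaurentPolynomial.eval₂ PowerSeries.C oneSubX

lemma phi_hbar : phi hbar = 1 - PowerSeries.X := by
  simp [phi, hbar, LaurentPolynomial.eval₂_T, oneSubX]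

/-- The action of scalars on `ℚ⟦q⟧⟦t⟧`. -/
def scal : CC →+* Op where
  toFun c := AddMonoidHom.mulLeft (PowerSeries.C (phi c))
  map_one' := AddMonoidHom.ext fun f => by
    change PowerSeries.C (phi 1) * f = f
    simp
  map_mul' c d := AddMonoidHom.ext fun f => by
    change PowerSeries.C (phi (c * d)) * f = PowerSeries.C (phi c) * (PowerSeries.C (phi d) * f)
    simp [mul_assoc]
  map_zero' := AddMonoidHom.ext fun f => by
    change PowerSeries.C (phi 0) * f = 0
    simp
  map_add' c d := AddMonoidHom.ext fun f => by
    change PowerSeries.C (phi (c + d)) * f = PowerSeries.C (phi c) * f + PowerSeries.C (phi d) * f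
    simp [add_mul]

lemma scal_apply (c : CC) (f : PowerSeries (PowerSeries ℚ)) :
    scal c f = PowerSeries.C (phi c) * f := rfl

/-- The operator by which a letter acts. -/
def opL : AB → Op
  | AB.a => opA
  | AB.b => opB

lemma scal_commute_opL (c : CC) (l : AB) : Commute (scal c) (opL l) := by
  refine AddMonoidHom.ext fun f => ?_
  change scal c (opL l f) = opL l (scal c f)
  cases l
  · ext1 n
    simp only [opL, scal_apply, coeff_opA, PowerSeries.coeff_C_mul]
    ring
  · simp only [opL, scal_apply, opB_apply]
    ring

lemma scal_commute (c : CC) (w : FreeMonoid AB) : Commute (scal c) (FreeMonoid.lift opL w) := by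
  induction w using FreeMonoid.inductionOn' with
  | one => simp
  | of_mul l w ih =>
    rw [map_mul, FreeMonoid.lift_eval_of]
    exact (scal_commute_opL c l).mul_right ih

/-- The representation of `ℌ̂` on `ℚ⟦q⟧⟦t⟧` extending the action of the letters. -/
def act : MonoidAlgebra CC (FreeMonoid AB) →+* Op :=
  MonoidAlgebra.liftNCRingHom scal (FreeMonoid.lift opL) scal_commute

lemma act_smul (c : CC) (x : MonoidAlgebra CC (FreeMonoid AB)) :
    act (c • x) = scal c * act x :=
  MonoidAlgebra.liftNC_smul scal (FreeMonoid.lift opL) c x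

lemma act_ofW (w : List AB) : act (ofW w) = (w.map opL).prod := by
  rw [← FreeMonoid.lift_ofList]
  simp [act, ofW, MonoidAlgebra.liftNCRingHom]

lemma act_letter (c : AB) : act (ofW [c]) = opL c := by simp [act_ofW]

/-- The generating series `F(x) = x · 1 ∈ ℚ⟦q⟧⟦t⟧`; for `x = e_{k₁}⋯e_{k_r}` it is
`∑_{m₁ > ⋯ > m_r > 0} ∏_j λ_{m_j}^{k_j} t^{m₁}`. -/
def gen (x : MonoidAlgebra CC (FreeMonoid AB)) : PowerSeries (PowerSeries ℚ) := act x 1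

lemma gen_add (x y : MonoidAlgebra CC (FreeMonoid AB)) : gen (x + y) = gen x + gen y := by
  rw [gen, map_add]
  rfl

lemma gen_neg (x : MonoidAlgebra CC (FreeMonoid AB)) : gen (-x) = -gen x := by
  rw [gen, map_neg]
  rfl

lemma gen_smul (c : CC) (x : MonoidAlgebra CC (FreeMonoid AB)) :
    gen (c • x) = PowerSeries.C (phi c) * gen x := by
  rw [gen, act_smul]
  rfl

lemma gen_one : gen 1 = 1 := by simp [gen]

lemma ofW_nil : ofW [] = 1 := by simp [ofW, MonoidAlgebra.one_def]

lemma ofW_append (w v : List AB) : ofW (w ++ v) = ofW w * ofW v := by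
  simp [ofW]

lemma ofW_cons (c : AB) (w : List AB) : ofW (c :: w) = ofW [c] * ofW w :=
  ofW_append [c] w

lemma gen_letter_mul (c : AB) (x : MonoidAlgebra CC (FreeMonoid AB)) :
    gen (ofW [c] * x) = opL c (gen x) := by
  rw [gen, map_mul, act_letter]
  rfl

lemma coeff_zero_gen_cons (c : AB) (w : List AB) :
    PowerSeries.coeff 0 (gen (ofW (c :: w))) = 0 := by
  rw [ofW_cons, gen_letter_mul]
  cases c
  · rw [opL, coeff_opA, lam_zero, zero_mul]
  · rw [opL, coeff_opB, Finset.sum_range_zero]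

/-- Words that are empty or end in `b`; these are the concatenations of words `e_k`. -/
def GoodW (w : List AB) : Prop := ∀ h : w ≠ [], w.getLast h = AB.b

lemma GoodW.tail {c : AB} {w : List AB} (h : GoodW (c :: w)) : GoodW w := by
  intro hw
  have := h (by simp)
  rwa [List.getLast_cons hw] at this

lemma GoodW.ne_nil {w : List AB} (h : GoodW (AB.a :: w)) : w ≠ [] := by
  rintro rfl
  have := h (by simp)
  simp at this

lemma GoodW.coeff_zero {w : List AB} (h : GoodW (AB.a :: w)) :
    PowerSeries.coeff 0 (gen (ofW w)) = 0 := by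
  obtain ⟨c, v, rfl⟩ := List.exists_cons_of_ne_nil h.ne_nil
  exact coeff_zero_gen_cons c v

/-- `neg_mul` with the negation that `dq` elaborates to, which rewriting does not match syntactically
with the one coming from the ring structure. -/
lemma H_neg_mul (x y : MonoidAlgebra CC (FreeMonoid AB)) : -x * y = -(x * y) :=
  neg_mul x y

/-! ### Compatibility with the q-shuffle product -/

/-- `F` turns `⧢_q` into the product of power series, on words that are empty or end in `b`. -/
lemma gen_sh
    (sh : MonoidAlgebra CC (FreeMonoid AB) →ₗ[CC]
        MonoidAlgebra CC (FreeMonoid AB) →ₗ[CC] MonoidAlgebra CC (FreeMonoid AB))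
    (hsh_one : ∀ x, sh 1 x = x) (hsh_one' : ∀ x, sh x 1 = x)
    (hsh : ∀ (α β : AB) (w v : List AB),
      sh (ofW (α :: w)) (ofW (β :: v)) =
        ofW [α] * sh (ofW w) (ofW (β :: v))
        + ofW [β] * sh (ofW (α :: w)) (ofW v)
        + dq α β * sh (ofW w) (ofW v)) :
    ∀ w v : List AB, GoodW w → GoodW v →
      gen (sh (ofW w) (ofW v)) = gen (ofW w) * gen (ofW v)
  | [], v, _, _ => by rw [ofW_nil, hsh_one, gen_one, one_mul]
  | w, [], _, _ => by rw [ofW_nil, hsh_one', gen_one, mul_one]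
  | α :: w, β :: v, hw, hv => by
    have h1 := gen_sh sh hsh_one hsh_one' hsh w (β :: v) hw.tail hv
    have h2 := gen_sh sh hsh_one hsh_one' hsh (α :: w) v hw hv.tail
    have h3 := gen_sh sh hsh_one hsh_one' hsh w v hw.tail hv.tail
    rw [hsh, gen_add, gen_add, gen_letter_mul, gen_letter_mul, h1, h2]
    rw [ofW_cons α w, ofW_cons β v, gen_letter_mul, gen_letter_mul]
    cases α <;> cases β <;> simp only [dq, opL, H_neg_mul, gen_neg, smul_mul_assoc, gen_smul,
      ofW_cons AB.a [AB.b], ofW_cons AB.b [AB.b], mul_assoc, gen_letter_mul, h3, opB_apply,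
      phi_hbar]
    · rw [opA_mul_opA hw.coeff_zero hv.coeff_zero]
    · rw [mul_left_comm]
      ring
    · ring
    · ring
  termination_by w v => w.length + v.length

/-- Membership in the span of the words ending in `b`, encoded as the left ideal generated by `b`. -/
def EndB (x : MonoidAlgebra CC (FreeMonoid AB)) : Prop := ∃ y, x = y * ofW [AB.b]

lemma EndB.mul_left {x : MonoidAlgebra CC (FreeMonoid AB)} (h : EndB x)
    (y : MonoidAlgebra CC (FreeMonoid AB)) : EndB (y * x) := by
  obtain ⟨z, rfl⟩ := h
  exact ⟨y * z, by rw [mul_assoc]⟩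

lemma EndB.add {x y : MonoidAlgebra CC (FreeMonoid AB)} (hx : EndB x) (hy : EndB y) :
    EndB (x + y) := by
  obtain ⟨z, rfl⟩ := hx
  obtain ⟨z', rfl⟩ := hy
  exact ⟨z + z', by rw [add_mul]⟩

lemma GoodW.endB {w : List AB} (h : GoodW w) (hw : w ≠ []) : EndB (ofW w) := by
  refine ⟨ofW w.dropLast, ?_⟩
  rw [← ofW_append, ← h hw, List.dropLast_append_getLast]

/-- `⧢_q` preserves the span of the words ending in `b`, the empty word being allowed as one of the
two factors. -/
lemma sh_endB
    (sh : MonoidAlgebra CC (FreeMonoid AB) →ₗ[CC]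
        MonoidAlgebra CC (FreeMonoid AB) →ₗ[CC] MonoidAlgebra CC (FreeMonoid AB))
    (hsh_one : ∀ x, sh 1 x = x) (hsh_one' : ∀ x, sh x 1 = x)
    (hsh : ∀ (α β : AB) (w v : List AB),
      sh (ofW (α :: w)) (ofW (β :: v)) =
        ofW [α] * sh (ofW w) (ofW (β :: v))
        + ofW [β] * sh (ofW (α :: w)) (ofW v)
        + dq α β * sh (ofW w) (ofW v)) :
    ∀ w v : List AB, GoodW w → GoodW v → (w ≠ [] ∨ v ≠ []) → EndB (sh (ofW w) (ofW v))
  | [], v, _, hv, h => by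
    rw [ofW_nil, hsh_one]
    exact hv.endB (by simpa using h)
  | w, [], hw, _, h => by
    rw [ofW_nil, hsh_one']
    exact hw.endB (by simpa using h)
  | α :: w, β :: v, hw, hv, _ => by
    have h1 := sh_endB sh hsh_one hsh_one' hsh w (β :: v) hw.tail hv (by simp)
    have h2 := sh_endB sh hsh_one hsh_one' hsh (α :: w) v hw hv.tail (by simp)
    rw [hsh]
    refine ((h1.mul_left _).add (h2.mul_left _)).add ?_
    by_cases hwv : w ≠ [] ∨ v ≠ []
    · exact (sh_endB sh hsh_one hsh_one' hsh w v hw.tail hv.tail hwv).mul_left _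
    · -- both letters are then final, hence equal to `b`, and `b ⋄ b = -bb`
      push Not at hwv
      obtain ⟨rfl, rfl⟩ := hwv
      have ha : α = AB.b := hw (by simp)
      have hb : β = AB.b := hv (by simp)
      subst ha hb
      rw [ofW_nil, hsh_one, mul_one]
      refine ⟨-ofW [AB.b], ?_⟩
      rw [dq, ofW_cons AB.b [AB.b], H_neg_mul]
  termination_by w v => w.length + v.length

lemma eWord_cons (k : ℕ) (ks : List ℕ) :
    eWord (k :: ks) = List.replicate k AB.a ++ (AB.b :: eWord ks) := by
  simp [eWord]

lemma exists_eWord (w : List AB) : ∃ k ks, w ++ [AB.b] = eWord (k :: ks) := by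
  induction w with
  | nil => exact ⟨0, [], by simp [eWord]⟩
  | cons c w ih =>
    obtain ⟨k, ks, h⟩ := ih
    cases c
    · exact ⟨k + 1, ks, by rw [List.cons_append, h]; simp [eWord, List.replicate_succ]⟩
    · exact ⟨0, k :: ks, by rw [List.cons_append, h, eWord_cons 0]; simp⟩

lemma goodW_eWord (ks : List ℕ) : GoodW (eWord ks) := by
  induction ks with
  | nil => intro h; exact absurd rfl h
  | cons k ks ih =>
    intro h
    by_cases h' : eWord ks = []
    · simp [eWord_cons, h']
    · have := ih h'
      simp only [eWord_cons]
      rw [List.getLast_append_of_ne_nil _ (by simp), List.getLast_cons h', this]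

/-- Left multiplication by `a` carries the words ending in `b` to admissible words. -/
lemma EndB.a_mul_mem {x : MonoidAlgebra CC (FreeMonoid AB)} (h : EndB x) :
    ofW [AB.a] * x ∈ H0 := by
  obtain ⟨y, rfl⟩ := h
  induction y using MonoidAlgebra.induction_on with
  | of m =>
    obtain ⟨k, ks, h⟩ := exists_eWord m.toList
    refine Submodule.subset_span ⟨(k + 1) :: ks, fun _ => by simp, ?_⟩
    have : MonoidAlgebra.of CC (FreeMonoid AB) m = ofW m.toList := rfl
    rw [this, ← ofW_append, ← ofW_append, h]
    simp [eWord, List.replicate_succ]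
  | add x y hx hy =>
    rw [add_mul, mul_add]
    exact H0.add_mem hx hy
  | smul r x hx =>
    rw [smul_mul_assoc, mul_smul_comm]
    exact H0.smul_mem r hx

/-- `ℌ̂⁰` is closed under `⧢_q`: for words `aw` and `av`, the recursion and `a ⋄ a = ℏ a` put a letter
`a` in front of every term. -/
lemma sh_mem_H0
    (sh : MonoidAlgebra CC (FreeMonoid AB) →ₗ[CC]
        MonoidAlgebra CC (FreeMonoid AB) →ₗ[CC] MonoidAlgebra CC (FreeMonoid AB))
    (hsh_one : ∀ x, sh 1 x = x) (hsh_one' : ∀ x, sh x 1 = x)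
    (hsh : ∀ (α β : AB) (w v : List AB),
      sh (ofW (α :: w)) (ofW (β :: v)) =
        ofW [α] * sh (ofW w) (ofW (β :: v))
        + ofW [β] * sh (ofW (α :: w)) (ofW v)
        + dq α β * sh (ofW w) (ofW v))
    (ks ls : List ℕ) (hks : Admissible ks) (hls : Admissible ls) :
    sh (ofW (eWord ks)) (ofW (eWord ls)) ∈ H0 := by
  rcases ks with - | ⟨k, ks⟩
  · rw [show eWord [] = [] from rfl, ofW_nil, hsh_one]
    exact Submodule.subset_span ⟨ls, hls, rfl⟩
  rcases ls with - | ⟨l, ls⟩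
  · rw [show eWord [] = [] from rfl, ofW_nil, hsh_one']
    exact Submodule.subset_span ⟨_, hks, rfl⟩
  have hk : 1 ≤ k := hks (by simp)
  have hl : 1 ≤ l := hls (by simp)
  obtain ⟨k, rfl⟩ := Nat.exists_eq_add_of_le' hk
  obtain ⟨l, rfl⟩ := Nat.exists_eq_add_of_le' hl
  have ha : ∀ (k : ℕ) (ks : List ℕ), eWord ((k + 1) :: ks) = AB.a :: eWord (k :: ks) := by
    intro k ks
    simp [eWord, List.replicate_succ]
  have gk := goodW_eWord (k :: ks)
  have gl := goodW_eWord (l :: ls)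
  have gk' := goodW_eWord ((k + 1) :: ks)
  have gl' := goodW_eWord ((l + 1) :: ls)
  have nk : eWord (k :: ks) ≠ [] := by simp [eWord_cons]
  have nl : eWord (l :: ls) ≠ [] := by simp [eWord_cons]
  rw [ha] at gk' gl' ⊢
  rw [ha, hsh]
  refine H0.add_mem (H0.add_mem ?_ ?_) ?_
  · exact (sh_endB sh hsh_one hsh_one' hsh _ _ gk gl' (Or.inl nk)).a_mul_mem
  · exact (sh_endB sh hsh_one hsh_one' hsh _ _ gk' gl (Or.inr nl)).a_mul_mem
  · rw [dq, smul_mul_assoc]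
    exact H0.smul_mem _ (sh_endB sh hsh_one hsh_one' hsh _ _ gk gl (Or.inl nk)).a_mul_mem

/-! ### Evaluation at `t = 1` -/

/-- The condition `q^m ∣ c_m` for all `m` on a series `∑_m c_m t^m`, under which the value at `t = 1` makes sense. -/
def Conv (f : PowerSeries (PowerSeries ℚ)) : Prop :=
  ∀ m, PowerSeries.X ^ m ∣ PowerSeries.coeff m f

/-- The value `∑_m c_m` at `t = 1` of a series `∑_m c_m t^m` satisfying `Conv`: terms with `m > N`
do not contribute to the coefficient of `q^N`. -/
def ev (f : PowerSeries (PowerSeries ℚ)) : PowerSeries ℚ :=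
  PowerSeries.mk fun N => ∑ m ∈ Finset.range (N + 1), PowerSeries.coeff N (PowerSeries.coeff m f)

lemma Conv.add {f g : PowerSeries (PowerSeries ℚ)} (hf : Conv f) (hg : Conv g) : Conv (f + g) :=
  fun m => by
    rw [map_add]
    exact dvd_add (hf m) (hg m)

lemma Conv.mul {f g : PowerSeries (PowerSeries ℚ)} (hf : Conv f) (hg : Conv g) : Conv (f * g) :=
  fun m => by
    rw [PowerSeries.coeff_mul]
    refine Finset.dvd_sum fun p hp => ?_
    rw [← Finset.HasAntidiagonal.mem_antidiagonal.1 hp, pow_add]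
    exact mul_dvd_mul (hf _) (hg _)

lemma Conv.C (c : PowerSeries ℚ) : Conv (PowerSeries.C c) := fun m => by
  rcases m with - | m
  · simp
  · simp

lemma Conv.zero : Conv 0 := fun m => by simp

lemma Conv.one : Conv 1 := by
  simpa using Conv.C 1

lemma ev_add (f g : PowerSeries (PowerSeries ℚ)) : ev (f + g) = ev f + ev g := by
  ext N
  simp [ev, Finset.sum_add_distrib]

lemma ev_zero : ev 0 = 0 := by
  ext N
  simp [ev]

lemma ev_C (c : PowerSeries ℚ) : ev (PowerSeries.C c) = c := by
  ext N
  simp [ev, Finset.sum_range_succ']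

/-- Any truncation order beyond `N` computes the coefficient of `q^N` in the value at `t = 1`. -/
lemma Conv.coeff_ev {f : PowerSeries (PowerSeries ℚ)} (hf : Conv f) {N M : ℕ} (h : N ≤ M) :
    PowerSeries.coeff N (ev f)
      = PowerSeries.coeff N (∑ m ∈ Finset.range (M + 1), PowerSeries.coeff m f) := by
  rw [ev, PowerSeries.coeff_mk, map_sum]
  refine Finset.sum_subset (Finset.range_mono (by omega)) fun m _ hm => ?_
  exact PowerSeries.X_pow_dvd_iff.1 (hf m) N (by simpa using hm)

/-- Evaluation at `t = 1` is multiplicative where it converges. -/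
lemma ev_mul {f g : PowerSeries (PowerSeries ℚ)} (hf : Conv f) (hg : Conv g) :
    ev (f * g) = ev f * ev g := by
  ext N
  have h1 : PowerSeries.coeff N (ev f * ev g) = PowerSeries.coeff N
      ((∑ m ∈ Finset.range (N + 1), PowerSeries.coeff m f) *
        ∑ m ∈ Finset.range (N + 1), PowerSeries.coeff m g) := by
    rw [PowerSeries.coeff_mul, PowerSeries.coeff_mul]
    refine Finset.sum_congr rfl fun p hp => ?_
    have := Finset.HasAntidiagonal.mem_antidiagonal.1 hp
    rw [hf.coeff_ev (M := N) (by omega), hg.coeff_ev (M := N) (by omega)]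
  rw [h1, (hf.mul hg).coeff_ev le_rfl, Finset.sum_mul_sum, ← Finset.sum_product', map_sum, map_sum]
  simp only [PowerSeries.coeff_mul _ f g, map_sum]
  rw [Finset.sum_sigma']
  -- the pairs with sum exceeding `N` have products divisible by `q^{N+1}`
  refine Finset.sum_of_injOn (fun x => x.2) ?_ ?_ ?_ ?_
  · rintro ⟨i, p⟩ hx ⟨j, p'⟩ hy h
    simp only [Finset.coe_sigma, Set.mem_sigma_iff, Finset.mem_coe,
      Finset.HasAntidiagonal.mem_antidiagonal] at hx hy h
    obtain ⟨-, rfl⟩ := hx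
    obtain ⟨-, rfl⟩ := hy
    subst h
    rfl
  · rintro ⟨i, p⟩ hx
    simp only [Finset.coe_sigma, Set.mem_sigma_iff, Finset.mem_coe, Finset.mem_range,
      Finset.HasAntidiagonal.mem_antidiagonal] at hx
    simp only [Finset.mem_coe, Finset.mem_product, Finset.mem_range]
    omega
  · rintro ⟨i, j⟩ _ hp
    have hij : N < i + j := by
      by_contra hcon
      exact hp ⟨⟨i + j, (i, j)⟩, by simpa using by omega, rfl⟩
    refine PowerSeries.X_pow_dvd_iff.1 ?_ N hij
    rw [pow_add]
    exact mul_dvd_mul (hf i) (hg j)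
  · intros
    rfl

/-! ### The values `ζ_q` as evaluations -/

/-- Strictly decreasing `n`-tuples of positive integers smaller than `M`. -/
def Dec (n M : ℕ) : Finset (Fin n → ℕ) :=
  (Fintype.piFinset fun _ : Fin n => Finset.Ioo 0 M).filter fun m => ∀ i j, i < j → m j < m i

lemma mem_Dec {n M : ℕ} {m : Fin n → ℕ} :
    m ∈ Dec n M ↔ ((∀ i j, i < j → m j < m i) ∧ ∀ i, 0 < m i) ∧ ∀ i, m i < M := by
  simp only [Dec, Finset.mem_filter, Fintype.mem_piFinset, Finset.mem_Ioo]
  exact ⟨fun h => ⟨⟨h.2, fun i => (h.1 i).1⟩, fun i => (h.1 i).2⟩,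
    fun h => ⟨fun i => ⟨h.1.2 i, h.2 i⟩, h.1.1⟩⟩

lemma cons_mem_Dec {n M p : ℕ} {m : Fin n → ℕ} :
    (Fin.cons p m : Fin (n + 1) → ℕ) ∈ Dec (n + 1) M ↔ p ∈ Finset.Ioo 0 M ∧ m ∈ Dec n p := by
  simp only [mem_Dec, Fin.forall_fin_succ, Fin.cons_zero, Fin.cons_succ, Finset.mem_Ioo,
    Fin.succ_lt_succ_iff, Fin.succ_pos, Fin.not_lt_zero, true_imp_iff,
    false_imp_iff, true_and]
  constructor
  · rintro ⟨⟨⟨h1, h2⟩, h3, h4⟩, h5, h6⟩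
    exact ⟨⟨h3, h5⟩, ⟨h2, h4⟩, h1⟩
  · rintro ⟨⟨h3, h5⟩, ⟨h2, h4⟩, h1⟩
    exact ⟨⟨⟨h1, h2⟩, h3, h4⟩, h5, fun i => (h1 i).trans h5⟩

lemma sum_Dec_succ {n M : ℕ} (F : (Fin (n + 1) → ℕ) → PowerSeries ℚ) :
    ∑ m ∈ Dec (n + 1) M, F m = ∑ p ∈ Finset.Ioo 0 M, ∑ m ∈ Dec n p, F (Fin.cons p m) := by
  rw [Finset.sum_sigma']
  refine Finset.sum_bij' (fun m _ => ⟨m 0, Fin.tail m⟩) (fun x _ => Fin.cons x.1 x.2) ?_ ?_ ?_ ?_ ?_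
  · intro m hm
    rw [← Fin.cons_self_tail m, cons_mem_Dec] at hm
    simpa using hm
  · rintro ⟨p, m⟩ hx
    exact cons_mem_Dec.2 (by simpa using hx)
  · intro m _
    exact Fin.cons_self_tail m
  · rintro ⟨p, m⟩ _
    simp
  · intro m _
    rw [Fin.cons_self_tail]

lemma gen_eWord_cons (k : ℕ) (ks : List ℕ) (p : ℕ) :
    PowerSeries.coeff p (gen (ofW (eWord (k :: ks)))) =
      lam p ^ k * ∑ p' ∈ Finset.range p, PowerSeries.coeff p' (gen (ofW (eWord ks))) := by
  rw [eWord_cons]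
  induction k with
  | zero =>
    rw [List.replicate_zero, List.nil_append, ofW_cons, gen_letter_mul, opL, coeff_opB, pow_zero,
      one_mul]
  | succ k ih =>
    rw [List.replicate_succ, List.cons_append, ofW_cons, gen_letter_mul, opL, coeff_opA, ih,
      pow_succ']
    ring

/-- The partial sums of the coefficients of `F(e_{k₁}⋯e_{k_r})` are truncated multiple sums. -/
lemma sum_gen_eWord (ks : List ℕ) (M : ℕ) (hM : ks = [] → 0 < M) :
    ∑ p ∈ Finset.range M, PowerSeries.coeff p (gen (ofW (eWord ks))) =
      ∑ m ∈ Dec ks.length M, ∏ j : Fin ks.length, lam (m j) ^ ks.get j := by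
  induction ks generalizing M with
  | nil =>
    obtain ⟨M, rfl⟩ := Nat.exists_eq_add_of_le' (hM rfl)
    have : Dec ([] : List ℕ).length (M + 1) = {fun i => i.elim0} := by
      ext m
      rw [mem_Dec, Finset.mem_singleton]
      exact ⟨fun _ => funext fun i => i.elim0,
        fun _ => ⟨⟨fun i => i.elim0, fun i => i.elim0⟩, fun i => i.elim0⟩⟩
    rw [this, show eWord [] = [] from rfl, ofW_nil, gen_one]
    simp [PowerSeries.coeff_one]
  | cons k ks ih =>
    have h := sum_Dec_succ (n := ks.length) (M := M)
      fun m => ∏ j : Fin (ks.length + 1), lam (m j) ^ (k :: ks).get j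
    refine Eq.trans ?_ h.symm
    have h0 : Finset.Ioo 0 M ⊆ Finset.range M := fun p hp => by
      simp only [Finset.mem_Ioo, Finset.mem_range] at hp ⊢
      omega
    rw [← Finset.sum_subset h0]
    · refine Finset.sum_congr rfl fun p hp => ?_
      rw [gen_eWord_cons, ih p fun _ => (Finset.mem_Ioo.1 hp).1, Finset.mul_sum]
      refine Finset.sum_congr rfl fun m _ => ?_
      rw [Fin.prod_univ_succ]
      simp
    · intro p hp hp'
      have : p = 0 := by
        simp only [Finset.mem_Ioo, Finset.mem_range] at hp hp'
        omega
      subst this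
      rw [gen_eWord_cons, Finset.sum_range_zero, mul_zero]

lemma conv_gen_eWord {ks : List ℕ} (hks : Admissible ks) : Conv (gen (ofW (eWord ks))) := by
  rcases ks with - | ⟨k, ks⟩
  · rw [show eWord [] = [] from rfl, ofW_nil, gen_one]
    exact Conv.one
  · intro m
    have hk : 1 ≤ k := hks (by simp)
    rw [gen_eWord_cons]
    exact ((X_pow_dvd_lam m).trans (dvd_pow_self _ (by omega))).mul_right _

lemma hasSum_subtype_of_finset {α : Type*} {p : α → Prop} {s : Finset α} (f : α → ℚ)
    (hs : ∀ x ∈ s, p x) (hf : ∀ x, p x → x ∉ s → f x = 0) :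
    HasSum (fun x : {x // p x} => f x.1) (∑ x ∈ s, f x) := by
  classical
  rw [← Finset.sum_subtype_of_mem f hs]
  exact hasSum_sum_of_ne_finset_zero fun x hx =>
    hf x.1 x.2 fun h => hx (Finset.mem_subtype.2 h)

/-- The series defining `ζ_q` at an admissible index is the value of `F` at `t = 1`. -/
lemma zetaQ_eq_ev {ks : List ℕ} (hks : Admissible ks) : zetaQ ks = ev (gen (ofW (eWord ks))) := by
  -- the topology on `ℚ⟦q⟧` is that of coefficientwise convergence
  have : T2Space (PowerSeries ℚ) := inferInstanceAs (T2Space ((Unit →₀ ℕ) → ℚ))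
  refine HasSum.tsum_eq ?_
  refine Pi.hasSum.2 fun d => ?_
  obtain ⟨N, rfl⟩ : ∃ N, d = Finsupp.single () N := ⟨d (), by ext; simp⟩
  change HasSum (fun m : {m : Fin ks.length → ℕ //
      (∀ i j : Fin ks.length, i < j → m j < m i) ∧ ∀ i, 0 < m i} =>
    PowerSeries.coeff N (∏ j : Fin ks.length,
      PowerSeries.X ^ (ks.get j * m.1 j) * ((qnum (m.1 j))⁻¹) ^ ks.get j))
    (PowerSeries.coeff N (ev (gen (ofW (eWord ks)))))
  have hterm : ∀ m : Fin ks.length → ℕ, ∏ j : Fin ks.length,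
      PowerSeries.X ^ (ks.get j * m j) * ((qnum (m j))⁻¹) ^ ks.get j
        = ∏ j : Fin ks.length, lam (m j) ^ ks.get j := fun m =>
    Finset.prod_congr rfl fun j _ => by rw [lam, mul_pow, ← pow_mul, mul_comm (m j)]
  simp only [hterm]
  rw [(conv_gen_eWord hks).coeff_ev le_rfl, sum_gen_eWord ks (N + 1) (fun _ => N.succ_pos), map_sum]
  refine hasSum_subtype_of_finset
    (fun m : Fin ks.length → ℕ => PowerSeries.coeff N (∏ j : Fin ks.length, lam (m j) ^ ks.get j))
    (fun m hm => (mem_Dec.1 hm).1) fun m hm hm' => ?_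
  -- outside the finite set the largest entry exceeds `N`, so the term is divisible by `q^{N+1}`
  rw [mem_Dec, not_and] at hm'
  have h := hm' hm
  push Not at h
  obtain ⟨i, hi⟩ := h
  rcases ks with - | ⟨k, ks⟩
  · exact i.elim0
  have hk : 1 ≤ k := hks (by simp)
  have h0 : N + 1 ≤ m (0 : Fin (ks.length + 1)) := by
    rcases eq_or_ne (i : Fin (ks.length + 1)) 0 with h' | h'
    · rwa [h'] at hi
    · exact hi.trans (hm.1 _ _ (Fin.pos_iff_ne_zero.2 h')).le
  refine PowerSeries.X_pow_dvd_iff.1 ?_ N h0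
  refine dvd_trans ?_ (Finset.dvd_prod_of_mem _ (Finset.mem_univ (0 : Fin (ks.length + 1))))
  exact (X_pow_dvd_lam _).trans (dvd_pow_self _ (by simpa using by omega))

/-- The linearity of `ζ_q` over `ℚ` and `ℏ` determines the action of all of `𝒞`. -/
lemma zetaq_smul (zetaq : MonoidAlgebra CC (FreeMonoid AB) →ₗ[ℚ] PowerSeries ℚ)
    (hzetaq_hbar : ∀ x, zetaq (hbar • x) = (1 - PowerSeries.X) * zetaq x) (c : CC) :
    ∀ x, zetaq (c • x) = phi c * zetaq x := by
  have hinv : ∀ x, zetaq ((LaurentPolynomial.T (-1) : CC) • x)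
      = phi (LaurentPolynomial.T (-1)) * zetaq x := by
    intro x
    have h1 := hzetaq_hbar ((LaurentPolynomial.T (-1) : CC) • x)
    have h3 : hbar * LaurentPolynomial.T (-1) = 1 := by
      rw [hbar, ← LaurentPolynomial.T_add]
      simp
    rw [smul_smul, h3, one_smul, ← phi_hbar] at h1
    rw [h1, ← mul_assoc, ← map_mul, mul_comm _ hbar, h3, map_one, one_mul]
  have hT : ∀ (n : ℕ) x, zetaq ((LaurentPolynomial.T (n : ℤ) : CC) • x)
      = phi (LaurentPolynomial.T (n : ℤ)) * zetaq x := by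
    intro n
    induction n with
    | zero => intro x; simp
    | succ n ih =>
      intro x
      rw [Nat.cast_succ, LaurentPolynomial.T_add, mul_smul, ih, map_mul, mul_assoc]
      congr 1
      rw [← hbar, hzetaq_hbar, phi_hbar]
  have hT' : ∀ (n : ℕ) x, zetaq ((LaurentPolynomial.T (-(n : ℤ)) : CC) • x)
      = phi (LaurentPolynomial.T (-(n : ℤ))) * zetaq x := by
    intro n
    induction n with
    | zero => intro x; simp
    | succ n ih =>
      intro x
      rw [Nat.cast_succ, neg_add, LaurentPolynomial.T_add, mul_smul, ih, map_mul, mul_assoc, hinv]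
  induction c using LaurentPolynomial.induction_on' with
  | add p q hp hq => intro x; rw [add_smul, map_add, hp, hq, map_add, add_mul]
  | C_mul_T n r =>
    intro x
    have hC : ∀ y, zetaq ((LaurentPolynomial.C r : CC) • y)
        = phi (LaurentPolynomial.C r) * zetaq y := by
      intro y
      have : (LaurentPolynomial.C r : CC) • y = r • y := by
        rw [← algebraMap_smul CC r y]
        rfl
      rw [this, map_smul, phi, LaurentPolynomial.eval₂_C, PowerSeries.smul_eq_C_mul]
    rw [mul_smul, hC, map_mul, mul_assoc]
    congr 1
    obtain ⟨n, rfl | rfl⟩ := n.eq_nat_or_neg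
    · exact hT n x
    · exact hT' n x

/-- On `ℌ̂⁰`, the map `ζ_q` is `F` followed by evaluation at `t = 1`. -/
lemma zetaq_eq_ev (zetaq : MonoidAlgebra CC (FreeMonoid AB) →ₗ[ℚ] PowerSeries ℚ)
    (hzetaq_hbar : ∀ x, zetaq (hbar • x) = (1 - PowerSeries.X) * zetaq x)
    (hzetaq : ∀ ks : List ℕ, Admissible ks → zetaq (ofW (eWord ks)) = zetaQ ks)
    {x : MonoidAlgebra CC (FreeMonoid AB)} (hx : x ∈ H0) :
    Conv (gen x) ∧ zetaq x = ev (gen x) := by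
  induction hx using Submodule.span_induction with
  | mem x h =>
    obtain ⟨ks, hks, rfl⟩ := h
    exact ⟨conv_gen_eWord hks, (hzetaq ks hks).trans (zetaQ_eq_ev hks)⟩
  | zero =>
    have : gen 0 = 0 := by rw [gen, map_zero]; rfl
    rw [this, map_zero, ev_zero]
    exact ⟨Conv.zero, rfl⟩
  | add x y _ _ hx hy =>
    rw [gen_add, map_add, ev_add, hx.2, hy.2]
    exact ⟨hx.1.add hy.1, rfl⟩
  | smul c x _ hx =>
    rw [gen_smul, zetaq_smul zetaq hzetaq_hbar, ev_mul (Conv.C _) hx.1, ev_C, hx.2]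
    exact ⟨(Conv.C _).mul hx.1, rfl⟩

theorem zetaq_qshuffle_hom
    -- the q-shuffle product ⧢_q : the generalized quasi-shuffle product
    -- associated to ⋄_q, a 𝒞-bilinear product on ℌ̂ ...
    (sh : MonoidAlgebra CC (FreeMonoid AB) →ₗ[CC]
        MonoidAlgebra CC (FreeMonoid AB) →ₗ[CC] MonoidAlgebra CC (FreeMonoid AB))
    (hsh_one : ∀ x, sh 1 x = x) (hsh_one' : ∀ x, sh x 1 = x)
    (hsh : ∀ (α β : AB) (w v : List AB),
      sh (ofW (α :: w)) (ofW (β :: v)) =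
        ofW [α] * sh (ofW w) (ofW (β :: v))
        + ofW [β] * sh (ofW (α :: w)) (ofW v)
        + dq α β * sh (ofW w) (ofW v))
    -- ζ_q : ℌ̂⁰ → ℚ[[q]], the 𝒞-linear map with ζ_q(e_{k₁}⋯e_{k_r}) = ζ_q(k₁,…,k_r);
    -- it is ℚ-linear and ℏ-equivariant (ℏ ↦ 1-q)
    (zetaq : MonoidAlgebra CC (FreeMonoid AB) →ₗ[ℚ] PowerSeries ℚ)
    (hzetaq_hbar : ∀ x, zetaq (hbar • x) = (1 - PowerSeries.X) * zetaq x)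
    (hzetaq : ∀ ks : List ℕ, Admissible ks → zetaq (ofW (eWord ks)) = zetaQ ks) :
    -- conclusion: ζ_q(w)ζ_q(u) = ζ_q(w ⧢_q u) for all w, u ∈ ℌ̂⁰
    ∀ w ∈ H0, ∀ u ∈ H0, zetaq w * zetaq u = zetaq (sh w u) := by
  have hsmul := zetaq_smul zetaq hzetaq_hbar
  intro w hw u hu
  -- both sides are bilinear over `𝒞`, so it suffices to treat words
  induction hw using Submodule.span_induction with
  | zero => simp
  | add x y _ _ hx hy => simp only [map_add, LinearMap.add_apply, add_mul, hx, hy]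
  | smul c x _ hx => rw [hsmul, map_smul, LinearMap.smul_apply, hsmul, mul_assoc, hx]
  | mem x h =>
    obtain ⟨ks, hks, rfl⟩ := h
    induction hu using Submodule.span_induction with
    | zero => simp
    | add x y _ _ hx hy => simp only [map_add, mul_add, hx, hy]
    | smul c x _ hx => rw [hsmul, map_smul, hsmul, mul_left_comm, hx]
    | mem x h =>
      obtain ⟨ls, hls, rfl⟩ := h
      have hmem := sh_mem_H0 sh hsh_one hsh_one' hsh ks ls hks hls
      rw [(zetaq_eq_ev zetaq hzetaq_hbar hzetaq hmem).2,
        gen_sh sh hsh_one hsh_one' hsh _ _ (goodW_eWord ks) (goodW_eWord ls),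
        ev_mul (conv_gen_eWord hks) (conv_gen_eWord hls), hzetaq ks hks, hzetaq ls hls,
        zetaQ_eq_ev hks, zetaQ_eq_ev hls]
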